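/- arXiv:1505.05068 — 2 statements merged into one kernel-verified Lean document; each statement's English description precedes it below -/
import Mathlib

section
/- For every sub-uniform probability measure μ on ℝ there exists a probability space carrying two random variables Q and R such that R is uniformly distributed on [0,1], Q has law μ, and E[R | Q] = Q almost surely. -/
open MeasureTheory Set

/-- A probability measure `μ` on `ℝ` is *sub-uniform* if it is dominated in the convex
order by the uniform distribution `U` on `[0,1]`: `∫ h dμ ≤ E[h(U)]` for every convex
`h : ℝ → ℝ` for which both integrals exist.  (The integral `∫ h dμ` exists, with a
value in `(-∞, ∞]`, precisely when the negative part of `h` is `μ`-integrable; in that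
case the inequality `∫ h dμ ≤ E[h(U)] < ∞` forces `h` to be `μ`-integrable.  The
expectation `E[h(U)]` always exists, since a convex function on `ℝ` is continuous,
hence bounded on `[0,1]`.) -/
def SubUniformMeasure (μ : Measure ℝ) : Prop :=
  ∀ h : ℝ → ℝ, ConvexOn ℝ Set.univ h →
    Integrable (fun x => max (-(h x)) 0) μ →
    Integrable h μ ∧ ∫ x, h x ∂μ ≤ ∫ x in Set.Icc (0:ℝ) 1, h x ∂volume

open scoped unitInterval

lemma sub_uniform_aux_supp (μ : Measure ℝ) [IsProbabilityMeasure μ]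
    (hμ : SubUniformMeasure μ) : ∀ᵐ x ∂μ, x ∈ Icc (0:ℝ) 1 := by
  have hc : ConvexOn ℝ Set.univ (fun x : ℝ => max (-x) 0 + max (x - 1) 0) := by
    have h1 : ConvexOn ℝ Set.univ (fun x : ℝ => -x) :=
      (concaveOn_id convex_univ).neg
    have h2 : ConvexOn ℝ Set.univ (fun x : ℝ => x - 1) := by
      exact (convexOn_id (𝕜 := ℝ) (β := ℝ) convex_univ).add_const (-1)
    have h0 : ConvexOn ℝ Set.univ (fun x : ℝ => (0:ℝ)) := convexOn_const 0 convex_univ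
    exact (h1.sup h0).add (h2.sup h0)
  have hnn : ∀ x : ℝ, 0 ≤ max (-x) 0 + max (x - 1) 0 := fun x => by positivity
  have hn : (fun x : ℝ => max (-(max (-x) 0 + max (x - 1) 0)) 0) = fun _ => (0:ℝ) := by
    funext x
    have := hnn x
    exact max_eq_right (by linarith)
  obtain ⟨hi, hle⟩ := hμ _ hc (by rw [hn]; exact integrable_zero _ _ _)
  have hz : ∫ x in Set.Icc (0:ℝ) 1, (max (-x) 0 + max (x - 1) 0) ∂volume = 0 := by
    rw [setIntegral_congr_fun (g := fun _ => (0:ℝ)) measurableSet_Icc]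
    · simp
    · intro x hx
      have h1 : max (-x) 0 = 0 := max_eq_right (by linarith [hx.1])
      have h2 : max (x - 1) 0 = 0 := max_eq_right (by linarith [hx.2])
      simp only [h1, h2, add_zero]
  rw [hz] at hle
  have h0 := le_antisymm hle (integral_nonneg hnn)
  rw [integral_eq_zero_iff_of_nonneg hnn hi] at h0
  filter_upwards [h0] with x hx
  have hx' : max (-x) 0 + max (x - 1) 0 = 0 := hx
  have h1 := le_max_left (-x) 0
  have h2 := le_max_right (-x) 0
  have h3 := le_max_left (x-1) 0
  have h4 := le_max_right (x-1) 0
  constructor <;> linarith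

lemma sub_uniform_aux_integrable (μ : Measure ℝ) [IsFiniteMeasure μ]
    (hs : ∀ᵐ x ∂μ, x ∈ Icc (0:ℝ) 1) {f : ℝ → ℝ} (hf : Continuous f) : Integrable f μ := by
  have h : IntegrableOn f (Icc (0:ℝ) 1) μ := hf.continuousOn.integrableOn_compact isCompact_Icc
  rwa [IntegrableOn, Measure.restrict_eq_self_of_ae_mem hs] at h

/-- extension of a function on the unit interval to the line -/
noncomputable def suExt (f : C(I, ℝ)) : ℝ → ℝ := fun x => f (projIcc 0 1 zero_le_one x)

lemma suExt_cont (f : C(I, ℝ)) : Continuous (suExt f) := f.continuous.comp continuous_projIcc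

/-- the integral functional -/
noncomputable def suInt (μ : Measure ℝ) [IsFiniteMeasure μ]
    (hs : ∀ᵐ x ∂μ, x ∈ Icc (0:ℝ) 1) : C(I, ℝ) →ₗ[ℝ] ℝ where
  toFun f := ∫ x, suExt f x ∂μ
  map_add' f g := integral_add (sub_uniform_aux_integrable μ hs (suExt_cont f))
    (sub_uniform_aux_integrable μ hs (suExt_cont g))
  map_smul' c f := integral_const_mul c _

/-- the test functions -/
noncomputable def suT : (C(I, ℝ) × C(I, ℝ) × C(I, ℝ)) →ₗ[ℝ] C(I × I, ℝ) where
  toFun a := ⟨fun z => a.1 z.1 + a.2.1 z.2 + a.2.2 z.1 * ((z.2 : ℝ) - z.1), by fun_prop⟩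
  map_add' a b := by ext z; simp; ring
  map_smul' c a := by ext z; simp; ring

lemma sub_uniform_key (μ : Measure ℝ) [IsProbabilityMeasure μ] (hμ : SubUniformMeasure μ)
    (hs : ∀ᵐ x ∂μ, x ∈ Icc (0:ℝ) 1) (f g c : C(I, ℝ))
    (h : ∀ x y : I, 0 ≤ f x + g y + c x * ((y : ℝ) - x)) :
    0 ≤ ∫ x, suExt f x ∂μ + ∫ x in Icc (0:ℝ) 1, suExt g x := by
  let H : ℝ → ℝ := fun y => ⨆ x : I, (-f x - c x * (y - x))
  have hb : ∀ y, BddAbove (range fun x : I => (-f x - c x * (y - x))) := by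
    intro y
    exact (isCompact_range (by fun_prop)).bddAbove
  have hc : ConvexOn ℝ Set.univ H := by
    refine ⟨convex_univ, ?_⟩
    intro u _ v _ a b ha hb' hab
    refine ciSup_le fun x => ?_
    have h1 := mul_le_mul_of_nonneg_left (le_ciSup (hb u) x) ha
    have h2 := mul_le_mul_of_nonneg_left (le_ciSup (hb v) x) hb'
    simp only [smul_eq_mul]
    have : b = 1 - a := by linarith
    subst this
    refine le_trans (le_of_eq ?_) (add_le_add h1 h2)
    ring
  have hcont : Continuous H := by
    rw [← continuousOn_univ]
    exact hc.continuousOn isOpen_univ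
  have hneg : Integrable (fun x => max (-(H x)) 0) μ :=
    sub_uniform_aux_integrable μ hs (by fun_prop)
  obtain ⟨hi, hle⟩ := hμ H hc hneg
  have h1 : ∫ x, -suExt f x ∂μ ≤ ∫ x, H x ∂μ := by
    refine integral_mono_ae (sub_uniform_aux_integrable μ hs (suExt_cont f).neg) hi ?_
    filter_upwards [hs] with x hx
    have := le_ciSup (hb x) ⟨x, hx⟩
    simpa [suExt, projIcc_of_mem zero_le_one hx] using this
  have h2 : ∫ x in Icc (0:ℝ) 1, H x ≤ ∫ x in Icc (0:ℝ) 1, suExt g x := by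
    refine setIntegral_mono_on (hcont.continuousOn.integrableOn_compact isCompact_Icc)
      ((suExt_cont g).continuousOn.integrableOn_compact isCompact_Icc) measurableSet_Icc ?_
    intro y hy
    refine ciSup_le fun x => ?_
    have := h x ⟨y, hy⟩
    simp only [suExt, projIcc_of_mem zero_le_one hy]
    linarith
  rw [integral_neg] at h1
  linarith

lemma sub_uniform_functional (μ : Measure ℝ) [IsProbabilityMeasure μ]
    (hμ : SubUniformMeasure μ) (hs : ∀ᵐ x ∂μ, x ∈ Icc (0:ℝ) 1) :
    ∃ Λ : C(I × I, ℝ) →ₗ[ℝ] ℝ, (∀ φ : C(I × I, ℝ), (∀ z, 0 ≤ φ z) → 0 ≤ Λ φ) ∧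
      ∀ a, Λ (suT a) = ∫ x, suExt a.1 x ∂μ + ∫ x in Icc (0:ℝ) 1, suExt a.2.1 x := by
  let ν : Measure ℝ := volume.restrict (Icc (0:ℝ) 1)
  have hν : ∀ᵐ x ∂ν, x ∈ Icc (0:ℝ) 1 := ae_restrict_mem measurableSet_Icc
  let L : (C(I, ℝ) × C(I, ℝ) × C(I, ℝ)) →ₗ[ℝ] ℝ :=
    (suInt μ hs).comp (LinearMap.fst ℝ _ _) +
      ((suInt ν hν).comp (LinearMap.fst ℝ _ _)).comp (LinearMap.snd ℝ _ _)
  have hL : ∀ a, L a = ∫ x, suExt a.1 x ∂μ + ∫ x in Icc (0:ℝ) 1, suExt a.2.1 x := fun a => rfl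
  have hpos : ∀ a, (∀ z, 0 ≤ suT a z) → 0 ≤ L a := by
    intro a ha
    rw [hL]
    exact sub_uniform_key μ hμ hs a.1 a.2.1 a.2.2 fun x y => ha (x, y)
  have hker : LinearMap.ker suT ≤ LinearMap.ker L := by
    intro a ha
    rw [LinearMap.mem_ker] at ha ⊢
    have h1 := hpos a (by rw [ha]; simp)
    have h2 := hpos (-a) (by rw [map_neg, ha]; simp)
    rw [map_neg] at h2
    linarith
  let ℓ : C(I × I, ℝ) →ₗ.[ℝ] ℝ :=
    ⟨LinearMap.range suT, ((LinearMap.ker suT).liftQ L hker).comp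
      (suT.quotKerEquivRange.symm : _ →ₗ[ℝ] _)⟩
  have hℓ : ∀ a (h : suT a ∈ ℓ.domain), ℓ ⟨suT a, h⟩ = L a := by
    intro a h
    change ((LinearMap.ker suT).liftQ L hker) (suT.quotKerEquivRange.symm ⟨suT a, h⟩) = L a
    rw [LinearMap.quotKerEquivRange_symm_apply_image]
    simp
  let s : PointedCone ℝ C(I × I, ℝ) :=
    { carrier := {φ | ∀ z, 0 ≤ φ z}
      add_mem' := fun {a b} ha hb z => add_nonneg (ha z) (hb z)
      zero_mem' := fun z => le_rfl
      smul_mem' := fun c a ha z => mul_nonneg c.2 (ha z) }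
  obtain ⟨Λ, h1, h2⟩ := riesz_extension s ℓ (by
      rintro ⟨_, a, rfl⟩ ha
      exact (hpos a ha).trans_eq (hℓ a ⟨a, rfl⟩).symm) (by
      intro φ
      refine ⟨⟨suT (ContinuousMap.const _ ‖φ‖, 0, 0), _, rfl⟩, fun z => ?_⟩
      have := φ.norm_coe_le_norm z
      rw [Real.norm_eq_abs] at this
      have := neg_abs_le (φ z)
      simp [suT]
      linarith)
  refine ⟨Λ, h2, fun a => ?_⟩
  rw [← hL, ← hℓ a ⟨a, rfl⟩]
  exact h1 ⟨suT a, a, rfl⟩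

lemma sub_uniform_measure (Λ : C(I × I, ℝ) →ₗ[ℝ] ℝ)
    (hΛ : ∀ φ : C(I × I, ℝ), (∀ z, 0 ≤ φ z) → 0 ≤ Λ φ) :
    ∃ P : Measure (I × I), IsFiniteMeasure P ∧ ∀ φ : C(I × I, ℝ), ∫ z, φ z ∂P = Λ φ := by
  let Λ' : CompactlySupportedContinuousMap (I × I) ℝ →ₚ[ℝ] ℝ :=
    { toFun g := Λ g.toContinuousMap
      map_add' g g' := Λ.map_add _ _
      map_smul' c g := Λ.map_smul _ _
      monotone' g g' h := by
        have := hΛ (g'.toContinuousMap - g.toContinuousMap) (fun z => sub_nonneg.2 (h z))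
        rw [map_sub] at this
        exact sub_nonneg.1 this }
  refine ⟨RealRMK.rieszMeasure Λ', inferInstance, fun φ => ?_⟩
  exact RealRMK.integral_rieszMeasure Λ' ⟨φ, HasCompactSupport.of_compactSpace _⟩

lemma sub_uniform_marginal (P : Measure (I × I)) [IsFiniteMeasure P] (p : I × I → I)
    (hp : Continuous p) (ρ : Measure ℝ) [IsFiniteMeasure ρ] (hs : ∀ᵐ x ∂ρ, x ∈ Icc (0:ℝ) 1)
    (h : ∀ f : C(I, ℝ), ∫ z, f (p z) ∂P = ∫ x, suExt f x ∂ρ) :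
    P.map (fun z => (p z : ℝ)) = ρ := by
  have hm : Measurable (fun z => (p z : ℝ)) := by fun_prop
  refine ext_of_forall_integral_eq_of_IsFiniteMeasure fun F => ?_
  rw [integral_map hm.aemeasurable (F.continuous.aestronglyMeasurable)]
  have := h ⟨fun x => F x, by fun_prop⟩
  refine this.trans (integral_congr_ae ?_)
  filter_upwards [hs] with x hx
  simp [suExt, projIcc_of_mem zero_le_one hx]

lemma sub_uniform_condexp (P : Measure (I × I)) [IsFiniteMeasure P]
    (h : ∀ c : C(I, ℝ), ∫ z, c z.1 * ((z.2 : ℝ) - z.1) ∂P = 0) :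
    P[fun z => (z.2 : ℝ) | MeasurableSpace.comap (fun z : I × I => (z.1 : ℝ))
      Real.measurableSpace] =ᵐ[P] fun z => (z.1 : ℝ) := by
  have hint : ∀ f : I × I → ℝ, Continuous f → Integrable f P := fun f hf =>
    integrableOn_univ.1 (hf.continuousOn.integrableOn_compact isCompact_univ)
  have hQ : Measurable (fun z : I × I => (z.1 : ℝ)) := by fun_prop
  have hle : MeasurableSpace.comap (fun z : I × I => (z.1 : ℝ)) Real.measurableSpace ≤
      (inferInstance : MeasurableSpace (I × I)) := hQ.comap_le
  have hfin : ∀ f : I × I → ℝ, Continuous f →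
      IsFiniteMeasure (P.withDensity fun z => ENNReal.ofReal (f z)) := fun f hf =>
    isFiniteMeasure_withDensity_ofReal (hint f hf).2
  have := hfin (fun z => (z.1 : ℝ)) (by fun_prop)
  have := hfin (fun z => (z.2 : ℝ)) (by fun_prop)
  have key : (P.withDensity fun z => ENNReal.ofReal (z.1 : ℝ)).map (fun z => (z.1 : ℝ)) =
      (P.withDensity fun z => ENNReal.ofReal (z.2 : ℝ)).map (fun z => (z.1 : ℝ)) := by
    refine ext_of_forall_integral_eq_of_IsFiniteMeasure fun F => ?_
    rw [integral_map hQ.aemeasurable F.continuous.aestronglyMeasurable,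
      integral_map hQ.aemeasurable F.continuous.aestronglyMeasurable,
      integral_withDensity_eq_integral_toReal_smul (by fun_prop) (by simp),
      integral_withDensity_eq_integral_toReal_smul (by fun_prop) (by simp)]
    have hF := h ⟨fun x => F x, by fun_prop⟩
    rw [eq_comm, ← sub_eq_zero, ← integral_sub, ← hF]
    · refine integral_congr_ae (Filter.Eventually.of_forall fun z => ?_)
      simp only [smul_eq_mul, ENNReal.toReal_ofReal z.1.2.1, ENNReal.toReal_ofReal z.2.2.1,
        ContinuousMap.coe_mk]
      ring
    · simp only [ENNReal.toReal_ofReal (Subtype.prop (_ : I)).1]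
      exact hint _ (by fun_prop)
    · simp only [ENNReal.toReal_ofReal (Subtype.prop (_ : I)).1]
      exact hint _ (by fun_prop)
  symm
  refine ae_eq_condExp_of_forall_setIntegral_eq hle (hint _ (by fun_prop))
    (fun s _ _ => (hint _ (by fun_prop)).integrableOn) ?_
    (Measurable.aestronglyMeasurable (comap_measurable _))
  rintro s ⟨B, hB, rfl⟩ -
  have hk := congrArg (fun m => m B) key
  simp only [Measure.map_apply hQ hB, withDensity_apply _ (hQ hB)] at hk
  rw [integral_eq_lintegral_of_nonneg_ae (Filter.Eventually.of_forall fun z => z.1.2.1)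
      (by fun_prop),
    integral_eq_lintegral_of_nonneg_ae (Filter.Eventually.of_forall fun z => z.2.2.1)
      (by fun_prop), hk]

/-- For every sub-uniform probability measure `μ` on `ℝ` there is a probability space
carrying random variables `Q` and `R` such that `R` is uniformly distributed on
`[0,1]`, `Q` has law `μ`, and `E[R | Q] = Q` almost surely (conditioning on the
σ-algebra generated by `Q`). -/
theorem subUniformMeasure_exists_martingale_coupling (μ : Measure ℝ)
    [IsProbabilityMeasure μ] (hμ : SubUniformMeasure μ) :
    ∃ (Ω : Type) (mΩ : MeasurableSpace Ω) (P : Measure Ω) (Q R : Ω → ℝ),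
      IsProbabilityMeasure P ∧ Measurable Q ∧ Measurable R ∧
      P.map R = volume.restrict (Set.Icc (0:ℝ) 1) ∧
      P.map Q = μ ∧
      P[R | MeasurableSpace.comap Q Real.measurableSpace] =ᵐ[P] Q := by
  have hs := sub_uniform_aux_supp μ hμ
  obtain ⟨Λ, hΛ, hT⟩ := sub_uniform_functional μ hμ hs
  obtain ⟨P, hP, hI⟩ := sub_uniform_measure Λ hΛ
  have hall : ∀ f g c : C(I, ℝ), ∫ z : I × I, (f z.1 + g z.2 + c z.1 * ((z.2 : ℝ) - z.1)) ∂P =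
      ∫ x, suExt f x ∂μ + ∫ x in Icc (0:ℝ) 1, suExt g x := fun f g c =>
    (hI (suT (f, g, c))).trans (hT (f, g, c))
  have h0 : suExt 0 = fun _ => (0:ℝ) := rfl
  have h1 : P.map (fun z : I × I => (z.1 : ℝ)) = μ :=
    sub_uniform_marginal P Prod.fst continuous_fst μ hs fun f => by
      simpa [h0] using hall f 0 0
  have h2 : P.map (fun z : I × I => (z.2 : ℝ)) = volume.restrict (Set.Icc (0:ℝ) 1) :=
    sub_uniform_marginal P Prod.snd continuous_snd _ (ae_restrict_mem measurableSet_Icc)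
      fun f => by simpa [h0] using hall 0 f 0
  have h3 := sub_uniform_condexp P fun c => by simpa [h0] using hall 0 0 c
  have hQ : Measurable (fun z : I × I => (z.1 : ℝ)) := by fun_prop
  refine ⟨I × I, inferInstance, P, fun z => z.1, fun z => z.2, ⟨?_⟩, hQ, by fun_prop,
    h2, h1, h3⟩
  have := congrArg (fun m => m univ) h1
  simpa [Measure.map_apply hQ MeasurableSet.univ] using this
end

section
/- Let Q be a mid-p-value under its null hypothesis, with support S_Q and distribution function F_Q. For every x ∈ S_Q, F_Q(x) = sup{ F_W(x) : F_W is the distribution function of a sub-uniform probability measure and F_W(y) = F_Q(y) for all y ∈ S_Q ∩ [0,x) }, where the constraint 'F_W = F_Q on S_Q ∩ [0,x)' is vacuous when S_Q ∩ [0,x) is empty. In words, among all sub-uniform distributions agreeing with F_Q on the supported points below x, the mid-p-value distribution attains the largest possible value at x. -/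
open MeasureTheory Set

/-- The (topological) support of a measure `ν` on `ℝ`: the set of points all of whose
neighbourhoods have positive measure.  This is the smallest closed set of full
measure. -/
def measureSupport (ν : Measure ℝ) : Set ℝ :=
  {x : ℝ | ∀ U ∈ nhds x, 0 < ν U}


namespace MidP

noncomputable def lam : Measure ℝ := volume.restrict (Set.Icc (0:ℝ) 1)

instance : IsProbabilityMeasure lam := ⟨by simp [lam]⟩

noncomputable def G (μ : Measure ℝ) (t : ℝ) : ℝ := μ.real (Ioi t)
noncomputable def A (μ : Measure ℝ) (t : ℝ) : ℝ := μ.real (Ici t)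
noncomputable def UU (μ : Measure ℝ) (p : ℝ × ℝ) : ℝ := G μ p.1 + p.2 * (A μ p.1 - G μ p.1)

lemma ae_lam : ∀ᵐ v ∂lam, v ∈ Icc (0:ℝ) 1 := ae_restrict_mem measurableSet_Icc

section
variable (μ : Measure ℝ) [IsProbabilityMeasure μ]

lemma G_anti : Antitone (G μ) := fun _ _ h => measureReal_mono (Ioi_subset_Ioi h)
lemma A_anti : Antitone (A μ) := fun _ _ h => measureReal_mono (Ici_subset_Ici.2 h)
lemma G_le_A (t : ℝ) : G μ t ≤ A μ t := measureReal_mono Ioi_subset_Ici_self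
lemma G_nonneg (t : ℝ) : 0 ≤ G μ t := measureReal_nonneg
lemma A_le_one (t : ℝ) : A μ t ≤ 1 := measureReal_le_one
lemma A_le_G {s t : ℝ} (h : s < t) : A μ t ≤ G μ s :=
  measureReal_mono (Ici_subset_Ioi.2 h)

lemma UU_meas : Measurable (UU μ) := by
  have h1 := (G_anti μ).measurable
  have h2 := (A_anti μ).measurable
  unfold UU
  fun_prop

lemma A_sub_G (t : ℝ) : A μ t - G μ t = μ.real {t} := by
  have : A μ t = μ.real {t} + G μ t := by
    unfold A G
    rw [← measureReal_union (by simp) measurableSet_Ioi]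
    congr 1
    ext y; simp [le_iff_lt_or_eq, eq_comm, or_comm]
  linarith

lemma UU_ge (t v : ℝ) (hv : v ∈ Icc (0:ℝ) 1) : G μ t ≤ UU μ (t, v) := by
  have := G_le_A μ t
  have := mul_nonneg hv.1 (sub_nonneg.2 this)
  simp only [UU]; linarith

lemma UU_le (t v : ℝ) (hv : v ∈ Icc (0:ℝ) 1) : UU μ (t, v) ≤ A μ t := by
  have := G_le_A μ t
  have := mul_le_mul_of_nonneg_right hv.2 (sub_nonneg.2 this)
  simp only [UU]; linarith

lemma G_eq (t : ℝ) : G μ t = 1 - ProbabilityTheory.cdf μ t := by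
  rw [ProbabilityTheory.cdf_eq_real, G, ← compl_Iic, probReal_compl_eq_one_sub measurableSet_Iic]

lemma ae_prod : ∀ᵐ p ∂(μ.prod lam), p.2 ∈ Icc (0:ℝ) 1 :=
  Measure.quasiMeasurePreserving_snd.ae ae_lam

lemma exists_t0 (u : ℝ) (h0 : 0 < u) (h1 : u < 1) :
    ∃ t0, G μ t0 ≤ u ∧ (∀ t < t0, u < G μ t) ∧ u ≤ A μ t0 := by
  have hF := ProbabilityTheory.cdf μ
  set S : Set ℝ := {t | G μ t ≤ u}
  have hne : S.Nonempty := by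
    have := (ProbabilityTheory.tendsto_cdf_atTop μ).eventually (lt_mem_nhds (show 1 - u < 1 by linarith))
    obtain ⟨t, ht⟩ := this.exists
    exact ⟨t, by simp only [S, mem_setOf_eq, G_eq]; linarith⟩
  have hbdd : BddBelow S := by
    have := (ProbabilityTheory.tendsto_cdf_atBot μ).eventually (gt_mem_nhds (show 0 < 1 - u by linarith))
    obtain ⟨t, ht⟩ := this.exists
    refine ⟨t, fun s hs => ?_⟩
    by_contra hlt
    push Not at hlt
    have := (G_anti μ) hlt.le
    have h3 : G μ s ≤ u := hs
    rw [G_eq μ t] at this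
    linarith
  refine ⟨sInf S, ?_, ?_, ?_⟩
  · have hr := (ProbabilityTheory.cdf μ).right_continuous (sInf S)
    have hr' : Filter.Tendsto (ProbabilityTheory.cdf μ) (nhdsWithin (sInf S) (Ioi (sInf S)))
      (nhds (ProbabilityTheory.cdf μ (sInf S))) := hr.mono_left (nhdsWithin_mono _ Ioi_subset_Ici_self)
    have : 1 - u ≤ ProbabilityTheory.cdf μ (sInf S) := by
      refine ge_of_tendsto hr' ?_
      filter_upwards [self_mem_nhdsWithin] with t ht
      obtain ⟨s, hs, hst⟩ := exists_lt_of_csInf_lt hne ht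
      have h3 : G μ t ≤ u := ((G_anti μ) hst.le).trans hs
      rw [G_eq] at h3; linarith
    rw [G_eq]; linarith
  · intro t ht
    by_contra h
    push Not at h
    exact absurd (csInf_le hbdd (show t ∈ S from h)) (not_le.2 ht)
  · have hl := (ProbabilityTheory.monotone_cdf μ).tendsto_leftLim (sInf S)
    have h2 : Function.leftLim (ProbabilityTheory.cdf μ) (sInf S) ≤ 1 - u := by
      refine le_of_tendsto hl ?_
      filter_upwards [self_mem_nhdsWithin] with t ht
      by_contra h
      push Not at h
      have : G μ t ≤ u := by rw [G_eq]; linarith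
      exact absurd (csInf_le hbdd (show t ∈ S from this)) (not_le.2 ht)
    have h3 : μ.real (Iio (sInf S)) ≤ 1 - u := by
      have := (ProbabilityTheory.cdf μ).measure_Iio (ProbabilityTheory.tendsto_cdf_atBot μ) (sInf S)
      rw [ProbabilityTheory.measure_cdf] at this
      rw [measureReal_def, this, sub_zero]
      exact ENNReal.toReal_le_of_le_ofReal (by linarith) (ENNReal.ofReal_le_ofReal h2)
    have h4 : A μ (sInf S) = 1 - μ.real (Iio (sInf S)) := by
      rw [A, ← compl_Iio, probReal_compl_eq_one_sub measurableSet_Iio]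
    linarith

lemma lam_Iic (c : ℝ) (hc : c ∈ Icc (0:ℝ) 1) : lam.real (Iic c) = c := by
  rw [lam, measureReal_restrict_apply measurableSet_Iic]
  have : Iic c ∩ Icc 0 1 = Icc 0 c := by
    ext y; simp only [mem_inter_iff, mem_Iic, mem_Icc]
    exact ⟨fun h => ⟨h.2.1, h.1⟩, fun h => ⟨h.2, h.1, h.2.trans hc.2⟩⟩
  rw [this]; simp [hc.1]

lemma prob_UU (u : ℝ) (h0 : 0 < u) (h1 : u < 1) :
    (μ.prod lam).real {p | UU μ p ≤ u} = u := by
  obtain ⟨t0, ha, hb, hc⟩ := exists_t0 μ u h0 h1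
  obtain ⟨c, hc01, hcm, hciff⟩ : ∃ c ∈ Icc (0:ℝ) 1, μ.real {t0} * c = u - G μ t0 ∧
      ∀ v ∈ Icc (0:ℝ) 1, (UU μ (t0, v) ≤ u ↔ v ≤ c) := by
    have hAG := A_sub_G μ t0
    rcases eq_or_lt_of_le (measureReal_nonneg (μ := μ) (s := {t0})) with h | h
    · refine ⟨1, by simp, by linarith, fun v hv => ?_⟩
      simp only [UU, hAG, ← h, hv.2, iff_true]; linarith
    · refine ⟨(u - G μ t0) / μ.real {t0}, ⟨by apply div_nonneg <;> linarith, ?_⟩, by field_simp, fun v hv => ?_⟩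
      · rw [div_le_one h]; linarith
      · rw [le_div_iff₀ h]; simp only [UU, hAG]
        constructor <;> intro <;> linarith
  have hset : ({p | UU μ p ≤ u} : Set (ℝ × ℝ)) =ᵐ[μ.prod lam]
      ((Ioi t0 ×ˢ univ) ∪ ({t0} ×ˢ Iic c) : Set (ℝ × ℝ)) := by
    filter_upwards [ae_prod μ] with p hp
    obtain ⟨t, v⟩ := p
    apply propext
    change UU μ (t, v) ≤ u ↔ (t, v) ∈ ((Ioi t0 ×ˢ univ) ∪ ({t0} ×ˢ Iic c) : Set (ℝ × ℝ))
    simp only [mem_union, mem_prod, mem_Ioi, mem_univ, and_true, mem_singleton_iff, mem_Iic]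
    rcases lt_trichotomy t t0 with h | h | h
    · have h2 := hb t h
      have h3 := UU_ge μ t v hp
      simp only [h.ne, not_lt.2 h.le, false_and, or_self, iff_false]
      linarith
    · subst h
      simp [hciff v hp]
    · simp only [h, true_or, iff_true]
      exact (UU_le μ t v hp).trans ((A_le_G μ h).trans ha)
  rw [measureReal_congr hset, measureReal_union, measureReal_prod_prod, measureReal_prod_prod,
    lam_Iic c hc01, hcm]
  · simp [G]
  · rw [Set.disjoint_left]
    rintro ⟨a, b⟩ h1 h2
    simp only [mem_prod, mem_Ioi, mem_singleton_iff] at h1 h2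
    exact absurd h2.1 h1.1.ne'
  · exact (measurableSet_singleton _).prod measurableSet_Iic

lemma map_UU : (μ.prod lam).map (UU μ) = lam := by
  have hm := UU_meas μ
  haveI : IsProbabilityMeasure ((μ.prod lam).map (UU μ)) :=
    Measure.isProbabilityMeasure_map hm.aemeasurable
  have key : ∀ (ρ : Measure ℝ) [IsProbabilityMeasure ρ],
      (∀ u, 0 < u → u < 1 → ρ.real (Iic u) = u) → ∀ u, ρ.real (Iic u) = max 0 (min u 1) := by
    intro ρ _ h u
    rcases le_or_gt u 0 with h0 | h0
    · rw [min_eq_left (by linarith), max_eq_left h0]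
      apply le_antisymm _ measureReal_nonneg
      refine le_of_forall_gt_imp_ge_of_dense fun e he => ?_
      have hm : 0 < min e (1/2) := lt_min he (by norm_num)
      calc ρ.real (Iic u) ≤ ρ.real (Iic (min e (1/2))) :=
            measureReal_mono (Iic_subset_Iic.2 (by linarith))
        _ = min e (1/2) := h _ hm (lt_of_le_of_lt (min_le_right _ _) (by norm_num))
        _ ≤ e := min_le_left _ _
    · rcases lt_or_ge u 1 with h1 | h1
      · rw [min_eq_left h1.le, max_eq_right h0.le, h u h0 h1]
      · rw [min_eq_right h1, max_eq_right zero_le_one]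
        apply le_antisymm measureReal_le_one
        refine le_of_forall_lt_imp_le_of_dense fun e he => ?_
        have hm : max e (1/2) < 1 := max_lt he (by norm_num)
        calc e ≤ max e (1/2) := le_max_left _ _
          _ = ρ.real (Iic (max e (1/2))) := (h _ (lt_of_lt_of_le (by norm_num) (le_max_right _ _)) hm).symm
          _ ≤ _ := measureReal_mono (Iic_subset_Iic.2 (by linarith))
  refine Measure.ext_of_Iic _ _ fun u => ?_
  rw [← measureReal_eq_measureReal_iff]
  rw [key lam (fun u h0 h1 => lam_Iic u ⟨h0.le, h1.le⟩) u]
  refine key _ (fun u h0 h1 => ?_) u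
  rw [map_measureReal_apply hm measurableSet_Iic]
  exact prob_UU μ u h0 h1

lemma integrable_UU (h : ℝ → ℝ) (hh : Integrable h lam) :
    Integrable (fun p => h (UU μ p)) (μ.prod lam) := by
  rw [← map_UU μ] at hh
  exact hh.comp_measurable (UU_meas μ)

lemma integral_UU (h : ℝ → ℝ) (hh : Measurable h) :
    ∫ p, h (UU μ p) ∂(μ.prod lam) = ∫ u, h u ∂lam := by
  conv_rhs => rw [← map_UU μ]
  rw [integral_map (UU_meas μ).aemeasurable hh.aestronglyMeasurable]

lemma integrable_lam (h : ℝ → ℝ) (hh : Continuous h) : Integrable h lam :=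
  hh.continuousOn.integrableOn_compact isCompact_Icc

lemma integral_section (t : ℝ) : ∫ v, UU μ (t, v) ∂lam = (A μ t + G μ t) / 2 := by
  simp only [UU]
  have hid : Integrable (fun v : ℝ => v * (A μ t - G μ t)) lam := integrable_lam _ (by fun_prop)
  rw [integral_add (integrable_const _) hid, integral_mul_const]
  have : ∫ v, v ∂lam = 1/2 := by
    rw [lam, integral_Icc_eq_integral_Ioc, ← intervalIntegral.integral_of_le zero_le_one]
    simp
  rw [this]; simp; ring

lemma integral_ind (c : ℝ) (hc : c ∈ Icc (0:ℝ) 1) (f : ℝ → ℝ) :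
    ∫ u, (Iic c).indicator f u ∂lam = ∫ u in (0:ℝ)..c, f u := by
  rw [integral_indicator measurableSet_Iic, lam, Measure.restrict_restrict measurableSet_Iic]
  have : Iic c ∩ Icc 0 1 = Icc 0 c := by
    ext y; simp only [mem_inter_iff, mem_Iic, mem_Icc]
    exact ⟨fun h => ⟨h.2.1, h.1⟩, fun h => ⟨h.2, h.1, h.2.trans hc.2⟩⟩
  rw [this, integral_Icc_eq_integral_Ioc, intervalIntegral.integral_of_le hc.1]

variable (q : ℝ → ℝ) (hq : ∀ t, q t = (A μ t + G μ t) / 2)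
include hq

lemma q_anti : Antitone q := fun s t h => by
  rw [hq, hq]; have := A_anti μ h; have := G_anti μ h; linarith

lemma q_mem (t : ℝ) : q t ∈ Icc (0:ℝ) 1 := by
  have := hq t; have := G_nonneg μ t; have := G_le_A μ t; have := A_le_one μ t
  constructor <;> linarith

lemma subunif : SubUniformMeasure (μ.map q) := by
  intro h hconv _
  have hqm := (q_anti μ q hq).measurable
  have hcont : Continuous h := by
    rw [← continuousOn_univ]; exact hconv.continuousOn isOpen_univ
  have hi : Integrable (fun t => h (q t)) μ := by
    obtain ⟨C, hC⟩ := isCompact_Icc.exists_bound_of_continuousOn (s := Icc (0:ℝ) 1) hcont.continuousOn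
    exact Integrable.of_bound (hcont.measurable.comp hqm).aestronglyMeasurable C
      (Filter.Eventually.of_forall fun t => hC _ (q_mem μ q hq t))
  refine ⟨(integrable_map_measure hcont.aestronglyMeasurable hqm.aemeasurable).2 hi, ?_⟩
  rw [integral_map hqm.aemeasurable hcont.aestronglyMeasurable]
  change _ ≤ ∫ u, h u ∂lam
  have hU := integrable_UU μ h (integrable_lam h hcont)
  rw [← integral_UU μ h hcont.measurable, integral_prod _ hU]
  refine integral_mono hi hU.integral_prod_left fun t => ?_
  have hc2 : Continuous fun v => UU μ (t, v) := by simp only [UU]; fun_prop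
  have := hconv.map_integral_le (μ := lam) (f := fun v => UU μ (t, v)) hcont.continuousOn isClosed_univ
    (by simp) (integrable_lam _ hc2) (integrable_lam _ (hcont.comp hc2))
  rw [integral_section, ← hq] at this
  exact this

lemma integral_q_le (x : ℝ) :
    ∫ t in {t | q t ≤ x}, q t ∂μ ≤ (μ.real {t | q t ≤ x})^2 / 2 := by
  set S : Set ℝ := {t | q t ≤ x} with hS
  set B := μ.real S with hB
  have hqm := (q_anti μ q hq).measurable
  have hSm : MeasurableSet S := hqm measurableSet_Iic
  have hB01 : B ∈ Icc (0:ℝ) 1 := ⟨measureReal_nonneg, measureReal_le_one⟩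
  have hUi : Integrable (UU μ) (μ.prod lam) := integrable_UU μ id (integrable_lam _ continuous_id)
  have hSi : Integrable ((Prod.fst ⁻¹' S).indicator (UU μ)) (μ.prod lam) :=
    hUi.indicator (measurable_fst hSm)
  have hBi : Integrable ((Iic B).indicator id) lam :=
    (integrable_lam _ continuous_id).indicator measurableSet_Iic
  have h1 : ∫ t in S, q t ∂μ = ∫ p, (Prod.fst ⁻¹' S).indicator (UU μ) p ∂(μ.prod lam) := by
    rw [integral_prod _ hSi, ← integral_indicator hSm]
    congr 1; ext t
    by_cases ht : t ∈ S
    · rw [indicator_of_mem ht, hq, ← integral_section]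
      congr 1; ext v
      rw [indicator_of_mem (show (t, v) ∈ Prod.fst ⁻¹' S from ht)]
    · rw [indicator_of_notMem ht]
      have : ∀ v, (Prod.fst ⁻¹' S).indicator (UU μ) (t, v) = 0 := fun v =>
        indicator_of_notMem (show (t, v) ∉ Prod.fst ⁻¹' S from ht) _
      simp [this]
  have h2 : ∫ p, (Prod.fst ⁻¹' S).indicator (UU μ) p ∂(μ.prod lam) ≤
      ∫ p, (Iic B).indicator id (UU μ p) ∂(μ.prod lam) := by
    refine integral_mono_ae hSi (integrable_UU μ _ hBi) ?_
    filter_upwards [ae_prod μ] with p hp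
    obtain ⟨t, v⟩ := p
    have h0 : 0 ≤ UU μ (t, v) := (G_nonneg μ t).trans (UU_ge μ t v hp)
    by_cases ht : t ∈ S
    · have : UU μ (t, v) ≤ B := (UU_le μ t v hp).trans
        (measureReal_mono fun s hs => ((q_anti μ q hq) hs).trans ht)
      rw [indicator_of_mem (show (t, v) ∈ Prod.fst ⁻¹' S from ht), indicator_of_mem (show UU μ (t, v) ∈ Iic B from this)]; rfl
    · rw [indicator_of_notMem (show (t, v) ∉ Prod.fst ⁻¹' S from ht)]
      exact indicator_apply_nonneg fun _ => h0
  rw [integral_UU μ _ (measurable_id.indicator measurableSet_Iic), integral_ind B hB01] at h2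
  rw [h1]
  simpa using h2

lemma le_cdf (x : ℝ) (hx : x ∈ measureSupport (μ.map q)) : x ≤ (μ.map q).real (Iic x) := by
  have hqm := (q_anti μ q hq).measurable
  haveI : IsProbabilityMeasure (μ.map q) := Measure.isProbabilityMeasure_map hqm.aemeasurable
  have hr : Filter.Tendsto (ProbabilityTheory.cdf (μ.map q)) (nhdsWithin x (Ioi x))
      (nhds (ProbabilityTheory.cdf (μ.map q) x)) :=
    ((ProbabilityTheory.cdf (μ.map q)).right_continuous x).mono_left
      (nhdsWithin_mono _ Ioi_subset_Ici_self)
  rw [← ProbabilityTheory.cdf_eq_real]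
  have hl : Filter.Tendsto (fun y => 2 * x - y) (nhdsWithin x (Ioi x)) (nhds x) := by
    have : Continuous fun y : ℝ => 2 * x - y := by fun_prop
    have h := this.tendsto x
    rw [show 2 * x - x = x by ring] at h
    exact h.mono_left nhdsWithin_le_nhds
  refine le_of_tendsto_of_tendsto hl hr ?_
  filter_upwards [self_mem_nhdsWithin] with y hy
  have hy' : x < y := hy
  have hpos := hx (Ioo (2 * x - y) y) (Ioo_mem_nhds (by linarith) hy')
  rw [Measure.map_apply hqm measurableSet_Ioo] at hpos
  obtain ⟨t, ht⟩ := nonempty_of_measure_ne_zero hpos.ne'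
  have ht1 : 2 * x - y < q t := ht.1
  have ht2 : q t < y := ht.2
  rw [ProbabilityTheory.cdf_eq_real, map_measureReal_apply hqm measurableSet_Iic]
  have : A μ t ≤ μ.real (q ⁻¹' Iic y) :=
    measureReal_mono fun s hs => ((q_anti μ q hq) hs).trans ht2.le
  have := hq t; have := G_le_A μ t
  linarith

end

lemma support_closed (ν : Measure ℝ) : IsClosed (measureSupport ν) := by
  rw [← isOpen_compl_iff, isOpen_iff_mem_nhds]
  intro x hx
  simp only [measureSupport, mem_compl_iff, mem_setOf_eq, not_forall] at hx
  obtain ⟨U, hU, h0⟩ := hx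
  filter_upwards [eventually_mem_nhds_iff.2 hU] with y hy hy2
  exact h0 (hy2 U hy)

lemma null_of_disjoint (ν : Measure ℝ) (s : Set ℝ) (h : ∀ y ∈ s, y ∉ measureSupport ν) :
    ν s = 0 := by
  refine measure_null_of_locally_null s fun y hy => ?_
  have := h y hy
  simp only [measureSupport, mem_setOf_eq, not_forall] at this
  obtain ⟨U, hU, h0⟩ := this
  exact ⟨U, mem_nhdsWithin_of_mem_nhds hU, by simpa using h0⟩

lemma cdf_le_of_agree (ν W : Measure ℝ) [IsProbabilityMeasure W] [IsProbabilityMeasure ν] (x : ℝ)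
    (hpos : ∀ y ∈ measureSupport ν, 0 ≤ y)
    (h : ∀ y ∈ measureSupport ν ∩ Set.Ico 0 x,
          (W (Set.Iic y)).toReal = (ν (Set.Iic y)).toReal) (y : ℝ) (hy : y < x) :
    ν (Iic y) ≤ W (Iic y) := by
  by_cases hne : (measureSupport ν ∩ Iic y).Nonempty
  · have hbd : BddAbove (measureSupport ν ∩ Iic y) := ⟨y, fun z hz => hz.2⟩
    have hmem := ((support_closed ν).inter isClosed_Iic).csSup_mem hne hbd
    set s := sSup (measureSupport ν ∩ Iic y)
    have hsy : s ≤ y := hmem.2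
    have h1 := h s ⟨hmem.1, hpos s hmem.1, lt_of_le_of_lt hsy hy⟩
    have h2 : ν (Ioc s y) = 0 := null_of_disjoint ν _ fun z hz hz2 =>
      absurd (le_csSup hbd ⟨hz2, hz.2⟩) (not_le.2 hz.1)
    have h3 : W (Iic s) = ν (Iic s) :=
      (ENNReal.toReal_eq_toReal_iff' (measure_ne_top _ _) (measure_ne_top _ _)).1 h1
    calc ν (Iic y) ≤ ν (Iic s) + ν (Ioc s y) := by
          rw [← Iic_union_Ioc_eq_Iic hsy]; exact measure_union_le _ _
      _ = W (Iic s) := by rw [h2, h3, add_zero]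
      _ ≤ W (Iic y) := measure_mono (Iic_subset_Iic.2 hsy)
  · rw [null_of_disjoint ν (Iic y) fun z hz hz2 => hne ⟨z, hz2, hz⟩]
    exact bot_le

lemma lintegral_cake (ν : Measure ℝ) (x : ℝ) :
    ∫⁻ w, ENNReal.ofReal (max (x - w) 0) ∂ν = ∫⁻ t in Ioi (0:ℝ), ν (Iic (x - t)) := by
  rw [lintegral_eq_lintegral_meas_le ν (f := fun w : ℝ => max (x - w) 0) (Filter.Eventually.of_forall fun w => le_max_right _ _)
    (by fun_prop)]
  refine setLIntegral_congr_fun measurableSet_Ioi fun t ht => ?_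
  have ht' : 0 < t := ht
  congr 1
  ext w
  simp only [mem_setOf_eq, mem_Iic, le_max_iff, not_le.2 ht', or_false]
  constructor <;> intro <;> linarith

lemma convex_hinge (c : ℝ) : ConvexOn ℝ univ (fun w : ℝ => max (c - w) 0) := by
  have h1 : ConvexOn ℝ univ (fun w : ℝ => c - w) :=
    (convexOn_const c convex_univ).sub (concaveOn_id convex_univ)
  exact h1.sup (convexOn_const 0 convex_univ)

lemma integrable_hinge (W : Measure ℝ) (hW : SubUniformMeasure W) (c : ℝ) :
    Integrable (fun w : ℝ => max (c - w) 0) W ∧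
      ∫ w, max (c - w) 0 ∂W ≤ ∫ w, max (c - w) 0 ∂lam := by
  refine hW _ (convex_hinge c) ?_
  have : (fun w : ℝ => max (-(max (c - w) 0)) 0) = fun _ => 0 := by
    ext w; exact max_eq_right (by simp)
  rw [this]; exact integrable_zero _ _ _

lemma hinge_lam (c : ℝ) (hc : c ∈ Icc (0:ℝ) 1) : ∫ w, max (c - w) 0 ∂lam = c^2/2 := by
  have : (fun w : ℝ => max (c - w) 0) = (Iic c).indicator (fun w => c - w) := by
    ext w
    by_cases hw : w ≤ c
    · rw [indicator_of_mem (show w ∈ Iic c from hw), max_eq_left (by linarith)]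
    · rw [indicator_of_notMem (show w ∉ Iic c from hw), max_eq_right (by push Not at hw; linarith)]
  rw [this, integral_ind c hc, intervalIntegral.integral_sub (by simp) (by simp)]
  simp; ring

end MidP

open ProbabilityTheory in
/-- Lemma 1 of the paper: mid-p-value distributions are *extremely liberal* among
sub-uniform distributions.  Let `Q = q(T)` be a mid-p-value under its null
hypothesis `T ∼ μ₀`, with law `ν`, support `S_Q = measureSupport ν` and distribution
function `F_Q(x) = ν(-∞, x]`.  For every `x ∈ S_Q`,
`F_Q(x) = sup { F_W(x) : F_W sub-uniform and F_W = F_Q on S_Q ∩ [0, x) }`,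
the constraint being vacuous when `S_Q ∩ [0, x)` is empty. -/
theorem midP_cdf_extremely_liberal (μ₀ : Measure ℝ) [IsProbabilityMeasure μ₀]
    (q : ℝ → ℝ)
    (hq : ∀ t, q t = (1/2) * (μ₀ (Set.Ici t)).toReal + (1/2) * (μ₀ (Set.Ioi t)).toReal)
    (ν : Measure ℝ) (hν : ν = μ₀.map q)
    (x : ℝ) (hx : x ∈ measureSupport ν) :
    (ν (Set.Iic x)).toReal =
      sSup {v : ℝ | ∃ W : Measure ℝ, IsProbabilityMeasure W ∧ SubUniformMeasure W ∧
        (∀ y ∈ measureSupport ν ∩ Set.Ico 0 x,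
          (W (Set.Iic y)).toReal = (ν (Set.Iic y)).toReal) ∧
        v = (W (Set.Iic x)).toReal} := by
  have hq' : ∀ t, q t = (MidP.A μ₀ t + MidP.G μ₀ t) / 2 := fun t => by
    rw [hq]; simp only [MidP.A, MidP.G, measureReal_def]; ring
  have hqm := (MidP.q_anti μ₀ q hq').measurable
  subst hν
  haveI : IsProbabilityMeasure (μ₀.map q) := Measure.isProbabilityMeasure_map hqm.aemeasurable
  have hsub := MidP.subunif μ₀ q hq'
  symm
  apply IsGreatest.csSup_eq
  refine ⟨⟨μ₀.map q, inferInstance, hsub, fun _ _ => rfl, rfl⟩, ?_⟩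
  rintro v ⟨W, hWp, hW, hagree, rfl⟩
  have hxB := MidP.le_cdf μ₀ q hq' x hx
  change W.real (Iic x) ≤ (μ₀.map q).real (Iic x)
  by_contra! hlt
  have hpos : ∀ y ∈ measureSupport (μ₀.map q), 0 ≤ y := by
    intro y hy
    by_contra! hy0
    have := hy (Iio 0) (Iio_mem_nhds hy0)
    rw [Measure.map_apply hqm measurableSet_Iio] at this
    obtain ⟨t, ht⟩ := nonempty_of_measure_ne_zero this.ne'
    exact absurd (MidP.q_mem μ₀ q hq' t).1 (not_le.2 ht)
  have hcdf := MidP.cdf_le_of_agree (μ₀.map q) W x hpos hagree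
  have hWx := MidP.integrable_hinge W hW x
  have hQx := MidP.integrable_hinge _ hsub x
  have h1 : ∫ w, max (x - w) 0 ∂(μ₀.map q) ≤ ∫ w, max (x - w) 0 ∂W := by
    rw [integral_eq_lintegral_of_nonneg_ae (f := fun w : ℝ => max (x - w) 0) (Filter.Eventually.of_forall fun w => le_max_right _ _)
      hQx.1.aestronglyMeasurable,
      integral_eq_lintegral_of_nonneg_ae (f := fun w : ℝ => max (x - w) 0) (Filter.Eventually.of_forall fun w => le_max_right _ _)
      hWx.1.aestronglyMeasurable]
    refine ENNReal.toReal_mono hWx.1.lintegral_lt_top.ne ?_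
    rw [MidP.lintegral_cake, MidP.lintegral_cake]
    refine setLIntegral_mono' measurableSet_Ioi fun t ht => hcdf _ ?_
    have ht' : 0 < t := ht
    linarith
  have hBeq : (μ₀.map q).real (Iic x) = μ₀.real {t | q t ≤ x} :=
    map_measureReal_apply hqm measurableSet_Iic
  have h2 := MidP.integral_q_le μ₀ q hq' x
  rw [← hBeq] at h2
  have hqi : Integrable q μ₀ := Integrable.of_bound hqm.aestronglyMeasurable 1
    (Filter.Eventually.of_forall fun t => by
      have := MidP.q_mem μ₀ q hq' t
      rw [Real.norm_eq_abs, abs_le]; constructor <;> linarith [this.1, this.2])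
  have hSm : MeasurableSet {t | q t ≤ x} := hqm measurableSet_Iic
  have h3 : ∫ w, max (x - w) 0 ∂(μ₀.map q) =
      x * (μ₀.map q).real (Iic x) - ∫ t in {t | q t ≤ x}, q t ∂μ₀ := by
    rw [integral_map hqm.aemeasurable hQx.1.aestronglyMeasurable]
    have : (fun t => max (x - q t) 0) = {t | q t ≤ x}.indicator (fun t => x - q t) := by
      ext t
      by_cases ht : q t ≤ x
      · rw [indicator_of_mem (show t ∈ {t | q t ≤ x} from ht), max_eq_left (by linarith)]
      · rw [indicator_of_notMem (show t ∉ {t | q t ≤ x} from ht),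
          max_eq_right (by push Not at ht; linarith)]
    rw [this, integral_indicator hSm, integral_sub (integrable_const _) hqi.integrableOn, hBeq]
    simp [mul_comm]
  have hB' : W.real (Iic x) ∈ Icc (0:ℝ) 1 := ⟨measureReal_nonneg, measureReal_le_one⟩
  set B := (μ₀.map q).real (Iic x)
  set B' := W.real (Iic x) with hB'def
  have hWB := MidP.integrable_hinge W hW B'
  rw [MidP.hinge_lam B' hB'] at hWB
  have h4 : ∫ w, max (x - w) 0 ∂W + (B' - x) * B' ≤ ∫ w, max (B' - w) 0 ∂W := by
    have hi : Integrable ((Iic x).indicator (fun _ => B' - x)) W :=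
      (integrable_const _).indicator measurableSet_Iic
    have : ∫ w, (Iic x).indicator (fun _ => B' - x) w ∂W = (B' - x) * B' := by
      rw [integral_indicator measurableSet_Iic]; simp [← hB'def, mul_comm]
    rw [← this, ← integral_add hWx.1 hi]
    refine integral_mono (hWx.1.add hi) hWB.1 fun w => ?_
    by_cases hw : w ≤ x
    · simp only [indicator_of_mem (show w ∈ Iic x from hw)]
      rw [max_eq_left (by linarith), max_eq_left (by linarith)]; linarith
    · simp only [indicator_of_notMem (show w ∉ Iic x from hw)]
      rw [max_eq_right (by push Not at hw; linarith)]; simp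
  have h5 : 0 < (B' - B) * ((B' + B) / 2 - x) := mul_pos (by linarith) (by linarith)
  nlinarith [hWB.2]
end
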